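/- arXiv:2308.15954 — 7 statements merged into one kernel-verified Lean document; each statement's English description precedes it below -/
import Mathlib

section
/- Let p₊, p₋ be coprime integers with p₋ > p₊ ≥ 2, and let J ⊆ ℤ[X,Y,Z] be the ideal generated by Z² − 1, U_{p₋}(X) − U_{p₋−2}(X) − 2Z, and U_{p₊}(Y) − U_{p₊−2}(Y) − 2Z. Then the quotient ring ℤ[X,Y,Z]/J is a free ℤ-module of rank 2p₊p₋. -/
/-!
The three relations can be imposed one at a time. Each has the form `g(t) = c` with `g ∈ ℤ[t]` monic
of positive degree and `c` already in the ring built so far: first `Z² = 1` over `ℤ`, then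
`U_q(X) - U_{q-2}(X) = 2Z` and finally `U_p(Y) - U_{p-2}(Y) = 2Z`. Adjoining a root of a monic
polynomial of degree `d` to a ring that is `ℤ`-free of rank `n` gives a ring that is `ℤ`-free of rank
`n * d` (`exists_isRootExt`), and `U_n - U_{n-2}` is monic of degree `n` for `n ≥ 2`
(`monic_U_sub`). The resulting tower, of rank `2 * q * p`, is identified with the quotient of
`ℤ[X,Y,Z]` by comparing universal properties (`nonempty_equiv`).
-/

noncomputable section

/-- The rescaled Chebyshev polynomials of the second kind in `ℤ[A]`:
`U 0 = 1`, `U 1 = A`, `U (n+1) = A * U n - U (n-1)`. -/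
def U : ℕ → Polynomial ℤ
  | 0 => 1
  | 1 => Polynomial.X
  | n + 2 => Polynomial.X * U (n + 1) - U n

/-- `U n` evaluated at the first variable `X` of `ℤ[X,Y,Z]`. -/
def UX (n : ℕ) : MvPolynomial (Fin 3) ℤ := Polynomial.aeval (MvPolynomial.X 0) (U n)

/-- `U n` evaluated at the second variable `Y` of `ℤ[X,Y,Z]`. -/
def UY (n : ℕ) : MvPolynomial (Fin 3) ℤ := Polynomial.aeval (MvPolynomial.X 1) (U n)

/-- The third variable `Z` of `ℤ[X,Y,Z]`. -/
def Zv : MvPolynomial (Fin 3) ℤ := MvPolynomial.X 2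

/-- The ideal `J = ⟨Z² - 1, U_{p₋}(X) - U_{p₋-2}(X) - 2Z, U_{p₊}(Y) - U_{p₊-2}(Y) - 2Z⟩`
of `ℤ[X,Y,Z]`, where `p = p₊` and `q = p₋`. -/
def Jpq (p q : ℕ) : Ideal (MvPolynomial (Fin 3) ℤ) :=
  Ideal.span {Zv ^ 2 - 1, UX q - UX (q - 2) - 2 * Zv, UY p - UY (p - 2) - 2 * Zv}

open Polynomial in
lemma monic_U (n : ℕ) : (U n).Monic ∧ (U n).natDegree = n := by
  induction n using Nat.strong_induction_on with
  | _ n ih =>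
    match n with
    | 0 => simp [U]
    | 1 => simp [U]
    | n + 2 =>
      obtain ⟨h1, d1⟩ := ih (n + 1) (by omega)
      obtain ⟨h0, d0⟩ := ih n (by omega)
      have hm : (X * U (n + 1)).Monic := monic_X.mul h1
      have hd : (X * U (n + 1)).natDegree = n + 2 := by
        rw [monic_X.natDegree_mul h1, d1, natDegree_X]; ring
      have hlt : (U n).degree < (X * U (n + 1)).degree := by
        rw [degree_eq_natDegree hm.ne_zero, degree_eq_natDegree h0.ne_zero, hd, d0]
        exact_mod_cast (by omega : n < n + 2)
      refine ⟨hm.sub_of_left hlt, ?_⟩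
      rw [U, natDegree_sub_eq_left_of_natDegree_lt (by omega), hd]

open Polynomial in
/-- The polynomial `U n - U (n - 2)` (a rescaled Chebyshev polynomial of the first kind) is monic of
degree `n`. -/
lemma monic_U_sub (n : ℕ) (hn : 2 ≤ n) :
    (U n - U (n - 2)).Monic ∧ (U n - U (n - 2)).natDegree = n := by
  obtain ⟨h1, d1⟩ := monic_U n
  obtain ⟨h0, d0⟩ := monic_U (n - 2)
  constructor
  · refine h1.sub_of_left ?_
    rw [degree_eq_natDegree h1.ne_zero, degree_eq_natDegree h0.ne_zero, d1, d0]
    exact_mod_cast (by omega : n - 2 < n)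
  · rw [natDegree_sub_eq_left_of_natDegree_lt (by omega), d1]

/-- `S` is `R[t]/(g(t) - c)`, with structure map `i : R → S` and `t ↦ s`, expressed by the universal
property of that quotient. Working with the universal property instead of a concrete model keeps the
iterated construction manageable. -/
structure IsRootExt {R S : Type} [CommRing R] [CommRing S] (i : R →+* S) (s : S)
    (g : Polynomial ℤ) (c : R) : Prop where
  aeval_eq : Polynomial.aeval s g = i c
  exists_lift : ∀ {Q : Type} [CommRing Q] (k : R →+* Q) (t : Q), Polynomial.aeval t g = k c →
    ∃ l : S →+* Q, (∀ r, l (i r) = k r) ∧ l s = t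
  hom_ext : ∀ {Q : Type} [CommRing Q] (l l' : S →+* Q), l.comp i = l'.comp i → l s = l' s → l = l'

lemma isRootExt_adjoinRoot (R : Type) [CommRing R] (g : Polynomial ℤ) (c : R) :
    IsRootExt (AdjoinRoot.of (g.map (Int.castRingHom R) - Polynomial.C c)) (AdjoinRoot.root _)
      g c := by
  refine ⟨?_, fun k t h => ?_, fun l l' h h' => AdjoinRoot.ringHom_ext h h'⟩
  · have h := AdjoinRoot.eval₂_root (g.map (Int.castRingHom R) - Polynomial.C c)
    rw [Polynomial.eval₂_sub, Polynomial.eval₂_map, Polynomial.eval₂_C, sub_eq_zero] at h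
    rw [← h, Polynomial.aeval_def]
    congr 1
  · refine ⟨AdjoinRoot.lift k t ?_, fun r => AdjoinRoot.lift_of _, AdjoinRoot.lift_root _⟩
    rw [Polynomial.eval₂_sub, Polynomial.eval₂_map, Polynomial.eval₂_C, sub_eq_zero, ← h,
      Polynomial.aeval_def]
    congr 1
    exact RingHom.ext_int _ _

open Polynomial in
/-- If `R` is `ℤ`-free of rank `n > 0` and `g` is monic of degree `d > 0`, then `R[t]/(g(t) - c)` is
`ℤ`-free of rank `n * d`: the products of a `ℤ`-basis of `R` with `1, t, …, t ^ (d - 1)` form a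
basis. -/
lemma exists_isRootExt (R : Type) [CommRing R] (n d : ℕ) (b : Module.Basis (Fin n) ℤ R)
    (hn : 0 < n) (g : Polynomial ℤ) (hg : g.Monic) (hd : g.natDegree = d) (hd0 : 0 < d) (c : R) :
    ∃ (S : Type) (_ : CommRing S) (i : R →+* S) (s : S),
      IsRootExt i s g c ∧ Nonempty (Module.Basis (Fin (n * d)) ℤ S) := by
  have : Nontrivial R := ⟨_, _, b.ne_zero ⟨0, hn⟩⟩
  have hm := hg.map (Int.castRingHom R)
  have hdm : (g.map (Int.castRingHom R)).natDegree = d := by rw [hg.natDegree_map, hd]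
  have hM : (g.map (Int.castRingHom R) - C c).Monic := by
    refine hm.sub_of_left (degree_C_le.trans_lt ?_)
    rw [degree_eq_natDegree hm.ne_zero, hdm]
    exact_mod_cast hd0
  have hD : (g.map (Int.castRingHom R) - C c).natDegree = d := by
    rw [natDegree_sub_C, hdm]
  let b' := (AdjoinRoot.powerBasisAux' hM).reindex (finCongr hD)
  have bS := (b.smulTower b').reindex finProdFinEquiv
  -- `bS` is a basis for the `ℤ`-module structure coming from `AdjoinRoot`; the identity map carries it
  -- to the one of the underlying additive group.
  exact ⟨_, _, _, _, isRootExt_adjoinRoot R g c,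
    ⟨bS.map (AddEquiv.refl _).toIntLinearEquiv⟩⟩

/-- Imposing `Z² = 1`, then `f(X) = 2Z`, then `g(Y) = 2Z` one after the other gives the quotient of
`ℤ[X,Y,Z]` by the ideal of all three relations. -/
lemma nonempty_equiv (f g : Polynomial ℤ) (I : Ideal (MvPolynomial (Fin 3) ℤ))
    (hI : I = Ideal.span {Zv ^ 2 - 1, Polynomial.aeval (MvPolynomial.X 0) f - 2 * Zv,
      Polynomial.aeval (MvPolynomial.X 1) g - 2 * Zv})
    {A B T : Type} [CommRing A] [CommRing B] [CommRing T] (i₁ : ℤ →+* A) (z₀ : A) (i₂ : A →+* B)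
    (x₀ : B) (i₃ : B →+* T) (y : T) (hA : IsRootExt i₁ z₀ (Polynomial.X ^ 2) 1)
    (hB : IsRootExt i₂ x₀ f (2 * z₀)) (hT : IsRootExt i₃ y g (i₂ (2 * z₀))) :
    Nonempty ((MvPolynomial (Fin 3) ℤ ⧸ I) ≃+* T) := by
  let x : T := i₃ x₀
  let z : T := i₃ (i₂ z₀)
  have hz : z ^ 2 = 1 := by
    have h := hA.aeval_eq
    rw [Polynomial.aeval_X_pow, map_one] at h
    rw [← map_pow, ← map_pow, h, map_one, map_one]
  have hx : Polynomial.aeval x f = 2 * z := by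
    have h := congrArg i₃ hB.aeval_eq
    rw [map_mul, map_mul, map_ofNat, map_ofNat] at h
    rw [← h]
    exact Polynomial.aeval_algHom_apply (RingHom.toIntAlgHom i₃) x₀ f
  have hy : Polynomial.aeval y g = 2 * z := by
    have h := hT.aeval_eq
    rwa [map_mul, map_mul, map_ofNat, map_ofNat] at h
  let φ₀ : MvPolynomial (Fin 3) ℤ →ₐ[ℤ] T := MvPolynomial.aeval ![x, y, z]
  have hφ : ∀ a ∈ I, φ₀.toRingHom a = 0 := by
    have hle : I ≤ RingHom.ker φ₀.toRingHom := by
      rw [hI, Ideal.span_le]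
      rintro a (rfl | rfl | rfl)
      · simp [φ₀, Zv, RingHom.mem_ker, hz]
      · simp [φ₀, Zv, RingHom.mem_ker, ← Polynomial.aeval_algHom_apply, hx]
      · simp [φ₀, Zv, RingHom.mem_ker, ← Polynomial.aeval_algHom_apply, hy]
    exact fun a ha => hle ha
  let φ : (MvPolynomial (Fin 3) ℤ ⧸ I) →+* T := Ideal.Quotient.lift I φ₀.toRingHom hφ
  let π := Ideal.Quotient.mk I
  have rel : ∀ a ∈ ({Zv ^ 2 - 1, Polynomial.aeval (MvPolynomial.X 0) f - 2 * Zv,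
      Polynomial.aeval (MvPolynomial.X 1) g - 2 * Zv} : Set (MvPolynomial (Fin 3) ℤ)), π a = 0 :=
    fun a ha => Ideal.Quotient.eq_zero_iff_mem.2 (hI ▸ Ideal.subset_span ha)
  have hπ : ∀ (a : MvPolynomial (Fin 3) ℤ) (h : Polynomial ℤ),
      Polynomial.aeval (π a) h = π (Polynomial.aeval a h) := fun a h =>
    Polynomial.aeval_algHom_apply (RingHom.toIntAlgHom π) a h
  have rz : Polynomial.aeval (π Zv) (Polynomial.X ^ 2 : Polynomial ℤ) = Int.castRingHom _ 1 := by
    have := rel _ (by simp : Zv ^ 2 - 1 ∈ _)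
    rw [map_sub, map_one, sub_eq_zero] at this
    rw [hπ, Polynomial.aeval_X_pow, this, map_one]
  obtain ⟨ψ₁, -, hψ₁⟩ := hA.exists_lift (Int.castRingHom (MvPolynomial (Fin 3) ℤ ⧸ I)) (π Zv) rz
  have rx : Polynomial.aeval (π (MvPolynomial.X 0)) f = ψ₁ (2 * z₀) := by
    have := rel _ (by simp : Polynomial.aeval (MvPolynomial.X 0) f - 2 * Zv ∈ _)
    rw [map_sub, map_mul, map_ofNat, sub_eq_zero] at this
    rw [hπ, this, map_mul, map_ofNat, hψ₁]
  obtain ⟨ψ₂, hψ₂', hψ₂⟩ := hB.exists_lift ψ₁ (π (MvPolynomial.X 0)) rx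
  have ry : Polynomial.aeval (π (MvPolynomial.X 1)) g = ψ₂ (i₂ (2 * z₀)) := by
    have := rel _ (by simp : Polynomial.aeval (MvPolynomial.X 1) g - 2 * Zv ∈ _)
    rw [map_sub, map_mul, map_ofNat, sub_eq_zero] at this
    rw [hπ, this, hψ₂', map_mul, map_ofNat, hψ₁]
  obtain ⟨ψ, hψ', hψ⟩ := hT.exists_lift ψ₂ (π (MvPolynomial.X 1)) ry
  have hψx : ψ x = π (MvPolynomial.X 0) := by rw [hψ', hψ₂]
  have hψz : ψ z = π (MvPolynomial.X 2) := by rw [hψ', hψ₂', hψ₁, Zv]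
  have hφX : ∀ i, φ (π (MvPolynomial.X i)) = ![x, y, z] i := fun i => by
    change φ₀ (MvPolynomial.X i) = _
    exact MvPolynomial.aeval_X _ _
  refine ⟨RingEquiv.ofRingHom φ ψ ?_ ?_⟩
  · apply hT.hom_ext
    · apply hB.hom_ext
      · apply hA.hom_ext
        · exact RingHom.ext_int _ _
        · change φ (ψ z) = z
          rw [hψz, hφX]; rfl
      · change φ (ψ x) = x
        rw [hψx, hφX]; rfl
    · change φ (ψ y) = y
      rw [hψ, hφX]; rfl
  · apply Ideal.Quotient.ringHom_ext
    apply MvPolynomial.ringHom_ext'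
    · exact RingHom.ext_int _ _
    · intro i
      change ψ (φ (π (MvPolynomial.X i))) = π (MvPolynomial.X i)
      rw [hφX]
      fin_cases i
      · exact hψx
      · exact hψ
      · exact hψz

/-- For coprime integers `p₋ > p₊ ≥ 2`, the quotient `ℤ[X,Y,Z]/J` is a free `ℤ`-module
of rank `2·p₊·p₋`. -/
theorem free_finrank_quotient_Jpq (p q : ℕ) (hco : Nat.Coprime p q)
    (hp : 2 ≤ p) (hpq : p < q) :
    Module.Free ℤ (MvPolynomial (Fin 3) ℤ ⧸ Jpq p q) ∧
    Module.finrank ℤ (MvPolynomial (Fin 3) ℤ ⧸ Jpq p q) = 2 * p * q := by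
  obtain ⟨hmq, hdq⟩ := monic_U_sub q (by omega)
  obtain ⟨hmp, hdp⟩ := monic_U_sub p hp
  obtain ⟨A, _, i₁, z, hA, ⟨b₁⟩⟩ := exists_isRootExt ℤ 1 2 (Module.Basis.singleton (Fin 1) ℤ)
    one_pos (Polynomial.X ^ 2) (Polynomial.monic_X_pow 2) (Polynomial.natDegree_X_pow 2) two_pos 1
  obtain ⟨B, _, i₂, x, hB, ⟨b₂⟩⟩ := exists_isRootExt A _ q b₁ (by omega) _ hmq hdq (by omega)
    (2 * z)
  obtain ⟨T, _, i₃, y, hT, ⟨b₃⟩⟩ := exists_isRootExt B _ p b₂ (Nat.mul_pos (by omega) (by omega))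
    _ hmp hdp (by omega) (i₂ (2 * z))
  obtain ⟨e⟩ := nonempty_equiv (U q - U (q - 2)) (U p - U (p - 2)) (Jpq p q) (by
    simp only [Jpq, UX, UY, map_sub]) i₁ z i₂ x i₃ y hA hB hT
  have b := b₃.map e.symm.toAddEquiv.toIntLinearEquiv
  refine ⟨Module.Free.of_basis b, ?_⟩
  rw [Module.finrank_eq_card_basis b, Fintype.card_fin]
  ring
end
end

section
/- For every real number β, the 2×2 real matrix N(β) with rows (h_{1,2} + h_β, (p₊/p₋)·h_β) and (1, h_{1,2} + h_β + 1 − p₊/p₋) has characteristic polynomial (t − h_{β−α₋/2})·(t − h_{β+α₋/2}). In particular, for β = α_{r,s;n} (r, s, n integers) its eigenvalues are h_{r,s+1;n} and h_{r,s−1;n}. -/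
/-!
A monic quadratic is determined by the sum and product of its roots, so it suffices to compare
the trace and determinant of `N(β)` with the sum and product of `h_{β ∓ α₋/2}`. Substituting
`p₊/p₋ = α₋²/2` and `α₊ = -2/α₋` turns both comparisons into rational identities in `α₋` and `β`
(`charpoly_Nmat_aux`). The statement for `β = α_{r,s;n}` is the special case given by
`α_{r,s±1;n} = α_{r,s;n} ∓ α₋/2`.
-/

noncomputable section

/-- `α₊ = √(2 p₋ / p₊)`, where `p = p₊` and `q = p₋`. -/
def alphaP (p q : ℕ) : ℝ := Real.sqrt (2 * (q : ℝ) / (p : ℝ))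

/-- `α₋ = -√(2 p₊ / p₋)`, where `p = p₊` and `q = p₋`. -/
def alphaM (p q : ℕ) : ℝ := -Real.sqrt (2 * (p : ℝ) / (q : ℝ))

/-- `α₀ = α₊ + α₋`. -/
def alphaZ (p q : ℕ) : ℝ := alphaP p q + alphaM p q

/-- The conformal weight `h_α = (1/2) · α · (α - α₀)`. -/
def hwt (p q : ℕ) (a : ℝ) : ℝ := (1 / 2) * a * (a - alphaZ p q)

/-- `α_{r,s;n} = ((1-r)/2)·α₊ + ((1-s)/2)·α₋ + (n/2)·√(2 p₊ p₋)`. -/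
def alphaRS (p q : ℕ) (r s n : ℤ) : ℝ :=
  ((1 - (r : ℝ)) / 2) * alphaP p q + ((1 - (s : ℝ)) / 2) * alphaM p q
    + ((n : ℝ) / 2) * Real.sqrt (2 * (p : ℝ) * (q : ℝ))

/-- `h_{r,s;n} = h_{α_{r,s;n}}`. -/
def hRS (p q : ℕ) (r s n : ℤ) : ℝ := hwt p q (alphaRS p q r s n)

/-- The 2×2 real matrix `N(β)` with rows `(h_{1,2} + h_β, (p₊/p₋)·h_β)` and
`(1, h_{1,2} + h_β + 1 - p₊/p₋)`.  (Here `p = p₊`, `q = p₋`.) -/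
def Nmat (p q : ℕ) (b : ℝ) : Matrix (Fin 2) (Fin 2) ℝ :=
  !![hRS p q 1 2 0 + hwt p q b, ((p : ℝ) / (q : ℝ)) * hwt p q b;
     1, hRS p q 1 2 0 + hwt p q b + 1 - (p : ℝ) / (q : ℝ)]

/-- The characteristic polynomial of a real 2×2 matrix is read off from its trace and determinant;
the two required identities follow from `α₊ α₋ = -2` and `α₋² = 2 p₊ / p₋`. -/
theorem charpoly_Nmat_aux (p q : ℕ) (hp : 0 < p) (hq : 0 < q) (b : ℝ) :
    (Nmat p q b).charpoly =
      (Polynomial.X - Polynomial.C (hwt p q (b - alphaM p q / 2))) *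
        (Polynomial.X - Polynomial.C (hwt p q (b + alphaM p q / 2))) := by
  have hp' : (0 : ℝ) < p := by exact_mod_cast hp
  have hq' : (0 : ℝ) < q := by exact_mod_cast hq
  have hmul : alphaP p q * alphaM p q = -2 := by
    unfold alphaP alphaM
    rw [mul_neg, ← Real.sqrt_mul (by positivity),
      show 2 * (q : ℝ) / p * (2 * p / q) = 2 ^ 2 by field_simp,
      Real.sqrt_sq (by norm_num)]
  have hsq : (p : ℝ) / q = alphaM p q ^ 2 / 2 := by
    unfold alphaM
    rw [neg_sq, Real.sq_sqrt (by positivity)]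
    ring
  have hm : alphaM p q ≠ 0 := by
    intro h
    rw [h] at hmul
    norm_num at hmul
  have hP : alphaP p q = -2 / alphaM p q := by
    rw [eq_div_iff hm, hmul]
  have htr : (Nmat p q b).trace =
      hwt p q (b - alphaM p q / 2) + hwt p q (b + alphaM p q / 2) := by
    simp only [Nmat, Matrix.trace_fin_two_of, hRS, hwt, alphaRS, alphaZ, hsq, hP]
    push_cast
    field_simp
    ring
  have hdet : (Nmat p q b).det =
      hwt p q (b - alphaM p q / 2) * hwt p q (b + alphaM p q / 2) := by
    simp only [Nmat, Matrix.det_fin_two_of, hRS, hwt, alphaRS, alphaZ, hsq, hP]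
    push_cast
    field_simp
    ring
  rw [Matrix.charpoly_fin_two, htr, hdet, Polynomial.C_add, Polynomial.C_mul]
  ring

/-- For every `β ∈ ℝ`, the characteristic polynomial of `N(β)` is
`(t - h_{β-α₋/2})·(t - h_{β+α₋/2})`; in particular for `β = α_{r,s;n}` its
eigenvalues are `h_{r,s+1;n}` and `h_{r,s-1;n}`. -/
theorem charpoly_Nmat (p q : ℕ) (hco : Nat.Coprime p q) (hp : 2 ≤ p) (hpq : p < q) :
    (∀ b : ℝ, (Nmat p q b).charpoly =
      (Polynomial.X - Polynomial.C (hwt p q (b - alphaM p q / 2))) *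
        (Polynomial.X - Polynomial.C (hwt p q (b + alphaM p q / 2)))) ∧
    (∀ r s n : ℤ, (Nmat p q (alphaRS p q r s n)).charpoly =
      (Polynomial.X - Polynomial.C (hRS p q r (s + 1) n)) *
        (Polynomial.X - Polynomial.C (hRS p q r (s - 1) n))) := by
  have hp0 : 0 < p := by omega
  have hq0 : 0 < q := by omega
  refine ⟨charpoly_Nmat_aux p q hp0 hq0, fun r s n => ?_⟩
  have h1 : alphaRS p q r (s + 1) n = alphaRS p q r s n - alphaM p q / 2 := by
    unfold alphaRS
    push_cast
    ring
  have h2 : alphaRS p q r (s - 1) n = alphaRS p q r s n + alphaM p q / 2 := by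
    unfold alphaRS
    push_cast
    ring
  rw [charpoly_Nmat_aux p q hp0 hq0, hRS, hRS, h1, h2]
end
end

section
/- For every real number β, the 2×2 real matrix N'(β) with rows (h_{2,1} + h_β, (p₋/p₊)·h_β) and (1, h_{2,1} + h_β + 1 − p₋/p₊) has characteristic polynomial (t − h_{β−α₊/2})·(t − h_{β+α₊/2}). In particular, for β = α_{r,s;n} (r, s, n integers) its eigenvalues are h_{r+1,s;n} and h_{r−1,s;n}. -/
/-!
Write `a = α₊`, `m = α₋`, `κ = p₋/p₊`. The square roots enter only through `a² = 2κ` and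
`a m = -2`. A monic quadratic is determined by its trace and determinant, and eliminating `κ`
turns both the trace and the determinant comparison into polynomial identities modulo
`a m + 2`. The second claim is the first one at `β = α_{r,s;n}`, because
`α_{r±1,s;n} = α_{r,s;n} ∓ α₊/2`.
-/

noncomputable section

/-- The 2×2 real matrix `N'(β)` with rows `(h_{2,1} + h_β, (p₋/p₊)·h_β)` and
`(1, h_{2,1} + h_β + 1 - p₋/p₊)`.  (Here `p = p₊`, `q = p₋`.) -/
def Nmat' (p q : ℕ) (b : ℝ) : Matrix (Fin 2) (Fin 2) ℝ :=
  !![hRS p q 2 1 0 + hwt p q b, ((q : ℝ) / (p : ℝ)) * hwt p q b;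
     1, hRS p q 2 1 0 + hwt p q b + 1 - (q : ℝ) / (p : ℝ)]

/-- Holds for all `p`, `q`, including `p = 0`, where both sides are `0` by the convention `x / 0 = 0`. -/
theorem half_alphaP_sq (p q : ℕ) : (q : ℝ) / (p : ℝ) = alphaP p q ^ 2 / 2 := by
  unfold alphaP
  rw [Real.sq_sqrt (by positivity)]
  ring

theorem alphaP_mul_alphaM {p q : ℕ} (hp : 0 < p) (hq : 0 < q) :
    alphaP p q * alphaM p q = -2 := by
  have hp' : (p : ℝ) ≠ 0 := by positivity
  have hq' : (q : ℝ) ≠ 0 := by positivity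
  unfold alphaP alphaM
  rw [mul_neg, ← Real.sqrt_mul (by positivity),
    show 2 * (q : ℝ) / p * (2 * p / q) = 2 ^ 2 by field_simp,
    Real.sqrt_sq (by norm_num)]

theorem trace_Nmat' {p q : ℕ} (hp : 0 < p) (hq : 0 < q) (b : ℝ) :
    (Nmat' p q b).trace =
      hwt p q (b - alphaP p q / 2) + hwt p q (b + alphaP p q / 2) := by
  have h := alphaP_mul_alphaM hp hq
  simp only [Nmat', Matrix.trace_fin_two_of, hRS, alphaRS, hwt, alphaZ, half_alphaP_sq]
  push_cast
  linear_combination (1 / 2) * h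

theorem det_Nmat' {p q : ℕ} (hp : 0 < p) (hq : 0 < q) (b : ℝ) :
    (Nmat' p q b).det =
      hwt p q (b - alphaP p q / 2) * hwt p q (b + alphaP p q / 2) := by
  have h := alphaP_mul_alphaM hp hq
  simp only [Nmat', Matrix.det_fin_two_of, hRS, alphaRS, hwt, alphaZ, half_alphaP_sq]
  push_cast
  -- The cofactor of `a m + 2` in the difference of the two sides is `h_b / 2 + 3a²/16 + a m / 8`.
  linear_combination
    ((1 / 2) * ((1 / 2) * b * (b - (alphaP p q + alphaM p q))) + 3 / 16 * alphaP p q ^ 2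
      + alphaP p q * alphaM p q / 8) * h

/-- For every `β ∈ ℝ`, the characteristic polynomial of `N'(β)` is
`(t - h_{β-α₊/2})·(t - h_{β+α₊/2})`; in particular for `β = α_{r,s;n}` its
eigenvalues are `h_{r+1,s;n}` and `h_{r-1,s;n}`. -/
theorem charpoly_Nmat' (p q : ℕ) (hco : Nat.Coprime p q) (hp : 2 ≤ p) (hpq : p < q) :
    (∀ b : ℝ, (Nmat' p q b).charpoly =
      (Polynomial.X - Polynomial.C (hwt p q (b - alphaP p q / 2))) *
        (Polynomial.X - Polynomial.C (hwt p q (b + alphaP p q / 2)))) ∧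
    (∀ r s n : ℤ, (Nmat' p q (alphaRS p q r s n)).charpoly =
      (Polynomial.X - Polynomial.C (hRS p q (r + 1) s n)) *
        (Polynomial.X - Polynomial.C (hRS p q (r - 1) s n))) := by
  have hp0 : 0 < p := by omega
  have hq0 : 0 < q := by omega
  have key : ∀ b : ℝ, (Nmat' p q b).charpoly =
      (Polynomial.X - Polynomial.C (hwt p q (b - alphaP p q / 2))) *
        (Polynomial.X - Polynomial.C (hwt p q (b + alphaP p q / 2))) := by
    intro b
    rw [Matrix.charpoly_fin_two, trace_Nmat' hp0 hq0, det_Nmat' hp0 hq0, Polynomial.C_add,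
      Polynomial.C_mul]
    ring
  refine ⟨key, fun r s n => ?_⟩
  have h1 : alphaRS p q (r + 1) s n = alphaRS p q r s n - alphaP p q / 2 := by
    unfold alphaRS
    push_cast
    ring
  have h2 : alphaRS p q (r - 1) s n = alphaRS p q r s n + alphaP p q / 2 := by
    unfold alphaRS
    push_cast
    ring
  rw [key, hRS, hRS, h1, h2]
end
end

section
/- Let p₊, p₋ be coprime integers with p₋ > p₊ ≥ 2. Set λ₊ = μ₊ = p₊/(2p₋), λ₋ = μ₋ = 1 − 3p₊/(2p₋), ν₊ = 0 and ν₋ = 2p₊/p₋ − 1. For ε, ε' ∈ {+,−} define F_{εε'} = Γ(−ε(μ₊−μ₋))·Γ(ε'(λ₊−λ₋)+1) / (Γ(λ_{ε'} + μ_{−ε} + ν₊)·Γ(λ_{ε'} + μ_{−ε} + ν₋)), where ε(x) denotes x if ε = + and −x if ε = −. Then the 2×2 connection matrix (F_{εε'})_{ε,ε'∈{+,−}} has nonzero determinant, and moreover F_{++} ≠ 0. -/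
/-!
Put `t = p / q`. All Gamma arguments in the matrix are integral affine functions of `t`:
`F₊₊ = Γ(1-2t)Γ(2t) / (Γ(1-t)Γ(t))`, `F₊₋ = Γ(1-2t)Γ(2-2t) / (Γ(2-3t)Γ(1-t))`,
`F₋₊ = Γ(2t-1)Γ(2t) / (Γ(t)Γ(3t-1))`, `F₋₋ = Γ(2t-1)Γ(2-2t) / (Γ(1-t)Γ(t))`.
In `F₊₊`, `F₋₋` and in the product `F₊₋ F₋₊` the Gamma factors pair up under Euler's reflection
formula, so these are quotients of sines, and `sin πt + sin 3πt = 2 sin 2πt cos πt` gives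
`det F = -1`, while `F₊₊ = sin πt / sin 2πt`. Coprimality enters only to ensure
`sin 2πt ≠ 0`, i.e. that `2p/q` is not an integer. The pole of `Γ(2-3t)` at `t = 2/3` needs no
separate treatment: the reflection formula in Mathlib holds at the poles with the same
conventions, and `sin 3πt` vanishes there.
-/

noncomputable section

/-- The exponents `λ₊ = p₊/(2p₋)` and `λ₋ = 1 - 3p₊/(2p₋)` at `x = 0`, indexed by
`Fin 2` with `0 ↦ +` and `1 ↦ -`.  (Here `p = p₊`, `q = p₋`.) -/
def lamExp (p q : ℕ) : Fin 2 → ℝ :=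
  ![(p : ℝ) / (2 * (q : ℝ)), 1 - 3 * (p : ℝ) / (2 * (q : ℝ))]

/-- The exponents `μ₊ = p₊/(2p₋)` and `μ₋ = 1 - 3p₊/(2p₋)` at `x = 1`, indexed by
`Fin 2` with `0 ↦ +` and `1 ↦ -`. -/
def muExp (p q : ℕ) : Fin 2 → ℝ :=
  ![(p : ℝ) / (2 * (q : ℝ)), 1 - 3 * (p : ℝ) / (2 * (q : ℝ))]

/-- The exponents `ν₊ = 0` and `ν₋ = 2p₊/p₋ - 1` at `x = ∞`, indexed by `Fin 2`. -/
def nuExp (p q : ℕ) : Fin 2 → ℝ := ![0, 2 * (p : ℝ) / (q : ℝ) - 1]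

/-- The sign `ε ↦ ε(x)` coefficient: `+ ↦ 1`, `- ↦ -1`. -/
def sgn : Fin 2 → ℝ := ![1, -1]

/-- The sign swap `ε ↦ -ε`. -/
def opp : Fin 2 → Fin 2 := ![1, 0]

/-- The connection matrix
`F_{εε'} = Γ(-ε(μ₊-μ₋))·Γ(ε'(λ₊-λ₋)+1) / (Γ(λ_{ε'}+μ_{-ε}+ν₊)·Γ(λ_{ε'}+μ_{-ε}+ν₋))`,
indexed by `Fin 2` with `0 ↦ +` and `1 ↦ -`.  (Real Gamma function; divisions by a
Gamma value at a pole are `0` since `Real.Gamma` vanishes at nonpositive integers and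
division by zero is zero, matching the reciprocal-Gamma convention.) -/
def Fmat (p q : ℕ) : Matrix (Fin 2) (Fin 2) ℝ := fun e e' =>
  Real.Gamma (-(sgn e) * (muExp p q 0 - muExp p q 1)) *
      Real.Gamma (sgn e' * (lamExp p q 0 - lamExp p q 1) + 1) /
    (Real.Gamma (lamExp p q e' + muExp p q (opp e) + nuExp p q 0) *
      Real.Gamma (lamExp p q e' + muExp p q (opp e) + nuExp p q 1))

/-- As `q ≥ 3` is coprime to `p`, the number `2p/q` is not an integer. -/
lemma sin_two_pi_ratio_ne_zero (p q : ℕ) (hco : Nat.Coprime p q) (hq : 3 ≤ q) :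
    Real.sin (Real.pi * (2 * ((p : ℝ) / q))) ≠ 0 := by
  intro h
  obtain ⟨n, hn⟩ := Real.sin_eq_zero_iff.mp h
  have hq0 : (q : ℝ) ≠ 0 := by positivity
  have h1 : (n : ℝ) = 2 * ((p : ℝ) / q) :=
    mul_right_cancel₀ Real.pi_ne_zero (by rw [hn]; ring)
  have h2 : (n : ℝ) * q = p * 2 := by rw [h1]; field_simp
  have h3 : n * (q : ℤ) = ((p * 2 : ℕ) : ℤ) := by exact_mod_cast h2
  have h4 : q ∣ p * 2 := by
    rw [← Int.natCast_dvd_natCast]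
    exact Dvd.intro_left n h3
  have h5 := Nat.le_of_dvd two_pos (hco.symm.dvd_of_dvd_mul_left h4)
  omega

lemma Fmat_entries (p q : ℕ) (t : ℝ) (ht : t = (p : ℝ) / q) (hq : (q : ℝ) ≠ 0) :
    Fmat p q 0 0 = Real.Gamma (1 - 2 * t) * Real.Gamma (2 * t) /
        (Real.Gamma (1 - t) * Real.Gamma t) ∧
    Fmat p q 0 1 = Real.Gamma (1 - 2 * t) * Real.Gamma (2 - 2 * t) /
        (Real.Gamma (2 - 3 * t) * Real.Gamma (1 - t)) ∧
    Fmat p q 1 0 = Real.Gamma (2 * t - 1) * Real.Gamma (2 * t) /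
        (Real.Gamma t * Real.Gamma (3 * t - 1)) ∧
    Fmat p q 1 1 = Real.Gamma (2 * t - 1) * Real.Gamma (2 - 2 * t) /
        (Real.Gamma (1 - t) * Real.Gamma t) := by
  subst ht
  simp only [Fmat, lamExp, muExp, nuExp, sgn, opp, Matrix.cons_val_zero, Matrix.cons_val_one]
  refine ⟨?_, ?_, ?_, ?_⟩ <;> congr 3 <;> field_simp <;> ring

/-- For coprime integers `p₋ > p₊ ≥ 2`, the connection matrix `(F_{εε'})` has nonzero
determinant, and moreover `F_{++} ≠ 0`. -/
theorem Fmat_det_ne_zero (p q : ℕ) (hco : Nat.Coprime p q) (hp : 2 ≤ p) (hpq : p < q) :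
    (Fmat p q).det ≠ 0 ∧ Fmat p q 0 0 ≠ 0 := by
  have hq : 3 ≤ q := by omega
  have hq0 : (0 : ℝ) < q := by positivity
  obtain ⟨t, ht⟩ : ∃ t : ℝ, t = (p : ℝ) / q := ⟨_, rfl⟩
  have ht0 : 0 < t := by rw [ht]; positivity
  have ht1 : t < 1 := by rw [ht, div_lt_one hq0]; exact_mod_cast hpq
  have hT : Real.sin (Real.pi * (2 * t)) ≠ 0 := ht ▸ sin_two_pi_ratio_ne_zero p q hco hq
  have hS : Real.sin (Real.pi * t) ≠ 0 :=
    (Real.sin_pos_of_pos_of_lt_pi (by positivity) (by nlinarith [Real.pi_pos])).ne'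
  obtain ⟨h00, h01, h10, h11⟩ := Fmat_entries p q t ht hq0.ne'
  have r1 := Real.Gamma_mul_Gamma_one_sub t
  have r2 := Real.Gamma_mul_Gamma_one_sub (2 * t)
  have r2' : Real.Gamma (2 * t - 1) * Real.Gamma (2 - 2 * t) =
      -(Real.pi / Real.sin (Real.pi * (2 * t))) := by
    have h := Real.Gamma_mul_Gamma_one_sub (2 * t - 1)
    rw [show Real.pi * (2 * t - 1) = Real.pi * (2 * t) - Real.pi by ring, Real.sin_sub_pi,
      div_neg] at h
    rw [← h]; congr 2; ring
  have r3 : Real.Gamma (3 * t - 1) * Real.Gamma (2 - 3 * t) =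
      -(Real.pi / Real.sin (Real.pi * (3 * t))) := by
    have h := Real.Gamma_mul_Gamma_one_sub (3 * t - 1)
    rw [show Real.pi * (3 * t - 1) = Real.pi * (3 * t) - Real.pi by ring, Real.sin_sub_pi,
      div_neg] at h
    rw [← h]; congr 2; ring
  have e00 : Fmat p q 0 0 = Real.sin (Real.pi * t) / Real.sin (Real.pi * (2 * t)) := by
    rw [h00, mul_comm (Real.Gamma (1 - 2 * t)), mul_comm (Real.Gamma (1 - t)), r1, r2]
    field_simp
  have e11 : Fmat p q 1 1 = -(Real.sin (Real.pi * t) / Real.sin (Real.pi * (2 * t))) := by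
    rw [h11, mul_comm (Real.Gamma (1 - t)), r1, r2']
    field_simp
  have eoff : Fmat p q 0 1 * Fmat p q 1 0 =
      Real.sin (Real.pi * t) * Real.sin (Real.pi * (3 * t)) /
        Real.sin (Real.pi * (2 * t)) ^ 2 := by
    calc Fmat p q 0 1 * Fmat p q 1 0
        = (Real.Gamma (2 * t) * Real.Gamma (1 - 2 * t)) *
            (Real.Gamma (2 * t - 1) * Real.Gamma (2 - 2 * t)) *
            (Real.Gamma t * Real.Gamma (1 - t))⁻¹ *
            (Real.Gamma (3 * t - 1) * Real.Gamma (2 - 3 * t))⁻¹ := by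
          rw [h01, h10]
          simp only [div_eq_mul_inv, mul_inv]
          ring
      _ = _ := by
          -- `inv_div` stays valid when `sin 3πt = 0`, so that case is not split off.
          rw [r1, r2, r2', r3, inv_neg, inv_div, inv_div]
          have := Real.pi_ne_zero
          field_simp
  have hsum : Real.sin (Real.pi * t) ^ 2 + Real.sin (Real.pi * t) * Real.sin (Real.pi * (3 * t)) =
      Real.sin (Real.pi * (2 * t)) ^ 2 := by
    rw [show Real.pi * (3 * t) = 3 * (Real.pi * t) by ring,
      show Real.pi * (2 * t) = 2 * (Real.pi * t) by ring, Real.sin_three_mul, Real.sin_two_mul,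
      mul_pow, Real.cos_sq']
    ring
  refine ⟨?_, by rw [e00]; exact div_ne_zero hS hT⟩
  have hdet : (Fmat p q).det = -1 := by
    rw [Matrix.det_fin_two, e00, e11, eoff, mul_neg, div_mul_div_comm, ← sq, ← sq,
      ← neg_div, ← sub_div, div_eq_iff (pow_ne_zero 2 hT)]
    linarith
  rw [hdet]
  norm_num
end
end

section
/- Let p₊, p₋ be coprime integers with p₋ > p₊ ≥ 2, and let n ≥ 1 be an integer. Then the intersection of the two finite sets of real numbers {h_{1,(2n+4)p₋−1−2k} : 1 ≤ k ≤ 2p₋−1} and {h_{(2n+4)p₊−1−2l,1} : 1 ≤ l ≤ 2p₊−1} is exactly the singleton {h_{(2n+2)p₊−1,1}}. -/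
/-!
With `p = p₊` and `q = p₋`, completing the square gives the closed form
`h_{r,s} = ((q r - p s)² - (q - p)²) / (4 p q)`, so `h_{1,s} = h_{r,1}` means `q - p s = ±(q r - p)`.
The plus sign reads `p (1 - s) = q (r - 1)`, which is impossible as `r, s > 1` on the given ranges.
The minus sign reads `q (r + 1) = p (s + 1)`, that is `q l = p k` for `r = (2n+4)p - 1 - 2l` and
`s = (2n+4)q - 1 - 2k`. Coprimality gives `p ∣ l`, and `1 ≤ l ≤ 2p - 1` leaves only `l = p`, `k = q`.
-/

noncomputable section

/-- The Kac formula `h_{r,s} = ((q r - p s)² - (q - p)²) / (4 p q)`. -/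
lemma hRS_zero_eq (p q : ℕ) (hp : 0 < p) (hq : 0 < q) (r s : ℤ) :
    hRS p q r s 0 =
      (((q : ℝ) * r - p * s) ^ 2 - ((q : ℝ) - p) ^ 2) / (4 * p * q) := by
  have hp' : (0 : ℝ) < p := by exact_mod_cast hp
  have hq' : (0 : ℝ) < q := by exact_mod_cast hq
  have hA : alphaP p q ^ 2 = 2 * (q : ℝ) / p := Real.sq_sqrt (by positivity)
  have hB : alphaM p q ^ 2 = 2 * (p : ℝ) / q := by
    rw [alphaM, neg_sq]
    exact Real.sq_sqrt (by positivity)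
  have hAB : alphaP p q * alphaM p q = -2 := by
    rw [alphaP, alphaM, mul_neg, ← Real.sqrt_mul (by positivity),
      show 2 * (q : ℝ) / p * (2 * p / q) = 2 ^ 2 by field_simp,
      Real.sqrt_sq (by norm_num)]
  have key : hRS p q r s 0 = (1 / 8) * (((r : ℝ) ^ 2 - 1) * alphaP p q ^ 2
      + ((s : ℝ) ^ 2 - 1) * alphaM p q ^ 2
      + 2 * (r * s - 1) * (alphaP p q * alphaM p q)) := by
    simp only [hRS, hwt, alphaRS, alphaZ]
    push_cast
    ring
  rw [key, hA, hB, hAB]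
  field_simp
  ring

/-- On ranges with `r, s > 1`, equal weights `h_{1,s} = h_{r,1}` are related by the reflection
`q (r + 1) = p (s + 1)`. -/
lemma hRS_eq_iff_s15 (p q : ℕ) (hp : 0 < p) (hq : 0 < q) (r s : ℤ) (hr : 1 < r) (hs : 1 < s) :
    hRS p q 1 s 0 = hRS p q r 1 0 ↔ (q : ℤ) * (r + 1) = p * (s + 1) := by
  have hp' : (0 : ℝ) < p := by exact_mod_cast hp
  have hq' : (0 : ℝ) < q := by exact_mod_cast hq
  have hpZ : (0 : ℤ) < p := by exact_mod_cast hp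
  have hqZ : (0 : ℤ) < q := by exact_mod_cast hq
  rw [hRS_zero_eq p q hp hq, hRS_zero_eq p q hp hq, div_left_inj' (by positivity),
    sub_left_inj]
  have hcast : ((q : ℝ) * ((1 : ℤ) : ℝ) - p * s) ^ 2 = ((q : ℝ) * r - p * ((1 : ℤ) : ℝ)) ^ 2 ↔
      ((q : ℤ) * 1 - p * s) ^ 2 = ((q : ℤ) * r - p * 1) ^ 2 := by norm_cast
  rw [hcast, sq_eq_sq_iff_eq_or_eq_neg]
  constructor
  · rintro (h | h)
    · nlinarith [mul_pos hqZ (sub_pos.2 hr), mul_pos hpZ (sub_pos.2 hs)]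
    · linarith
  · intro h
    right
    linarith

/-- Every solution of `q l = p k` with `0 < l < 2 p` has `l = p` (and hence `k = q`): by coprimality
`p` divides `l`. -/
lemma eq_of_mul_eq (p q : ℕ) (hco : Nat.Coprime p q) (k l : ℤ)
    (hl : 1 ≤ l) (hl' : l ≤ 2 * (p : ℤ) - 1) (h : (q : ℤ) * l = p * k) : l = p := by
  have hdvd : (p : ℤ) ∣ l :=
    (Nat.isCoprime_iff_coprime.2 hco).dvd_of_dvd_mul_left ⟨k, h⟩
  obtain ⟨j, rfl⟩ := hdvd
  have hj : 0 < j := by by_contra! hj; nlinarith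
  have hj' : j < 2 := by by_contra! hj'; nlinarith
  obtain rfl : j = 1 := by omega
  ring

/-- For coprime `p₋ > p₊ ≥ 2` and an integer `n ≥ 1`, the intersection of
`{h_{1,(2n+4)p₋-1-2k} : 1 ≤ k ≤ 2p₋-1}` and `{h_{(2n+4)p₊-1-2l,1} : 1 ≤ l ≤ 2p₊-1}`
is exactly `{h_{(2n+2)p₊-1,1}}`.  (Here `p = p₊`, `q = p₋`.) -/
theorem common_weights_singleton (p q : ℕ) (hco : Nat.Coprime p q) (hp : 2 ≤ p) (hpq : p < q)
    (n : ℤ) (hn : 1 ≤ n) :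
    {x : ℝ | ∃ k : ℤ, 1 ≤ k ∧ k ≤ 2 * (q : ℤ) - 1 ∧
        x = hRS p q 1 ((2 * n + 4) * (q : ℤ) - 1 - 2 * k) 0} ∩
      {x : ℝ | ∃ l : ℤ, 1 ≤ l ∧ l ≤ 2 * (p : ℤ) - 1 ∧
        x = hRS p q ((2 * n + 4) * (p : ℤ) - 1 - 2 * l) 1 0} =
    {hRS p q ((2 * n + 2) * (p : ℤ) - 1) 1 0} := by
  have hp0 : 0 < p := by omega
  have hq0 : 0 < q := by omega
  have hpZ : (2 : ℤ) ≤ p := by exact_mod_cast hp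
  have hqZ : (2 : ℤ) ≤ q := by omega
  have hnp : (p : ℤ) ≤ n * p := by nlinarith
  have hnq : (q : ℤ) ≤ n * q := by nlinarith
  ext x
  simp only [Set.mem_inter_iff, Set.mem_ofPred_eq, Set.mem_singleton_iff]
  constructor
  · rintro ⟨⟨k, hk, hk', hx⟩, l, hl, hl', hx'⟩
    have h := (hRS_eq_iff_s15 p q hp0 hq0 _ _ (by linarith) (by linarith)).1 (hx.symm.trans hx')
    have hlp : l = p := eq_of_mul_eq p q hco k l hl hl' (by linarith)
    rw [hx', hlp]
    congr 1
    ring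
  · intro hx
    refine ⟨⟨q, by linarith, by linarith, ?_⟩, p, by linarith, by linarith, ?_⟩
    · rw [hx]
      exact ((hRS_eq_iff_s15 p q hp0 hq0 _ _ (by linarith) (by linarith)).2 (by ring)).symm
    · rw [hx]
      congr 1
      ring
end
end

section
/- Let p₊, p₋ be coprime integers with p₋ > p₊ ≥ 2. For all integers r, s, i, j with 1 ≤ r ≤ p₊−1, 1 ≤ s ≤ p₋−1, 1 ≤ i ≤ p₊−1 and 1 ≤ j ≤ p₋−1, one has h_{2p₊−r, s} ≠ h_{3p₊−r−2i, p₋+s−2j}. (Equivalently, the product ∏_{i=1}^{p₊−1} ∏_{j=1}^{p₋−1} (h_{2p₊−r,s} − h_{3p₊−r−2i, p₋+s−2j}) is nonzero.) -/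
/-!
Completing the square in `h_α = α (α - α₀) / 2` gives
`h_{r,s} = ((r α₊ + s α₋)² - α₀²) / 8`. Since `α₋ / α₊ = -p₊ / p₋`, the equality
`h_{r,s} = h_{r',s'}` forces `r p₋ - s p₊ = ±(r' p₋ - s' p₊)`.
At the weights in question the sign `+` reads `i p₋ = j p₊`, and the sign `-` reads
`(2 p₊ - r - i) p₋ = (s - j) p₊`. By coprimality, the first gives `p₊ ∣ i`, which is impossible
for `1 ≤ i < p₊`; the second gives `p₊ ∣ r + i`, so the positive integer `2 p₊ - r - i` is at
least `p₊` and `s - j ≥ p₋`, which is impossible for `s, j` in `[1, p₋ - 1]`.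
-/

noncomputable section

theorem alphaP_pos {p q : ℕ} (hp : 0 < p) (hq : 0 < q) : 0 < alphaP p q := by
  unfold alphaP; positivity

theorem mul_alphaM {p q : ℕ} (hp : 0 < p) (hq : 0 < q) :
    (q : ℝ) * alphaM p q = -((p : ℝ) * alphaP p q) := by
  have hp' : (0 : ℝ) < p := by exact_mod_cast hp
  have hq' : (0 : ℝ) < q := by exact_mod_cast hq
  have h : (q : ℝ) * √(2 * (p : ℝ) / q) = p * √(2 * (q : ℝ) / p) := by
    -- both sides are nonnegative with square `2 p q`
    rw [← sq_eq_sq₀ (by positivity) (by positivity), mul_pow, mul_pow,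
      Real.sq_sqrt (by positivity), Real.sq_sqrt (by positivity)]
    field_simp
  unfold alphaM alphaP
  linarith

/-- Equal conformal weights have equal squares `(r p₋ - s p₊)²`. -/
theorem sq_eq_of_hRS_eq {p q : ℕ} (hp : 0 < p) (hq : 0 < q) {r s r' s' : ℤ}
    (h : hRS p q r s 0 = hRS p q r' s' 0) :
    (r * (q : ℤ) - s * p) ^ 2 = (r' * (q : ℤ) - s' * p) ^ 2 := by
  have ha := alphaP_pos hp hq
  have hb := mul_alphaM hp hq
  have key : ∀ x y : ℤ, ((x * q - y * p : ℝ)) ^ 2 * alphaP p q ^ 2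
      = (q : ℝ) ^ 2 * (8 * hRS p q x y 0 + alphaZ p q ^ 2) := by
    intro x y
    have h1 : (x * q - y * p : ℝ) * alphaP p q = q * (x * alphaP p q + y * alphaM p q) := by
      linear_combination -(y : ℝ) * hb
    rw [← mul_pow, h1]
    simp only [hRS, hwt, alphaRS, alphaZ, Int.cast_zero]
    ring
  have h2 : ((r * q - s * p : ℝ)) ^ 2 = (r' * q - s' * p : ℝ) ^ 2 := by
    apply mul_right_cancel₀ (pow_pos ha 2).ne'
    rw [key, key, h]
  exact_mod_cast h2

/-- For coprime `p₋ > p₊ ≥ 2` and integers `1 ≤ r ≤ p₊-1`, `1 ≤ s ≤ p₋-1`,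
`1 ≤ i ≤ p₊-1`, `1 ≤ j ≤ p₋-1`, one has `h_{2p₊-r,s} ≠ h_{3p₊-r-2i,p₋+s-2j}`.
(Here `p = p₊`, `q = p₋`.) -/
theorem hRS_ne_of_interior (p q : ℕ) (hco : Nat.Coprime p q) (hp : 2 ≤ p) (hpq : p < q)
    (r s i j : ℤ) (hr1 : 1 ≤ r) (hr2 : r ≤ (p : ℤ) - 1) (hs1 : 1 ≤ s) (hs2 : s ≤ (q : ℤ) - 1)
    (hi1 : 1 ≤ i) (hi2 : i ≤ (p : ℤ) - 1) (hj1 : 1 ≤ j) (hj2 : j ≤ (q : ℤ) - 1) :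
    hRS p q (2 * (p : ℤ) - r) s 0 ≠ hRS p q (3 * (p : ℤ) - r - 2 * i) ((q : ℤ) + s - 2 * j) 0 := by
  intro h
  have hcop : IsCoprime (p : ℤ) (q : ℤ) := Nat.isCoprime_iff_coprime.mpr hco
  have hp0 : (p : ℤ) ≠ 0 := by omega
  rcases sq_eq_sq_iff_eq_or_eq_neg.mp (sq_eq_of_hRS_eq (by omega) (by omega) h) with h1 | h1
  · have h2 : i * (q : ℤ) = p * j := by linarith
    have h3 : (p : ℤ) ∣ i := hcop.dvd_of_dvd_mul_right ⟨j, h2⟩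
    have := Int.le_of_dvd (by omega) h3
    omega
  · have h2 : (2 * (p : ℤ) - r - i) * q = p * (s - j) := by linarith
    obtain ⟨k, hk⟩ : (p : ℤ) ∣ 2 * p - r - i := hcop.dvd_of_dvd_mul_right ⟨s - j, h2⟩
    -- `0 < 2p - r - i`, so the quotient `k` is at least `1`, which already makes `s - j` too large
    have hk1 : 0 < k := by
      apply pos_of_mul_pos_right (a := (p : ℤ)) <;> omega
    have h3 : k * q = s - j := by
      apply mul_left_cancel₀ hp0
      rw [← h2, hk]; ring
    nlinarith
end
end

section
/- Let p₊, p₋ be coprime integers with p₋ > p₊ ≥ 2. For all integers a, b, a', b', one has h_{a,b} = h_{a',b'} if and only if (a'−a)·p₋ = (b'−b)·p₊ or (a+a')·p₋ = (b+b')·p₊. -/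
/-!
Completing the square in `h_α = α (α - α₀) / 2` and using `α₊² = 2q/p`, `α₋² = 2p/q`, `α₊ α₋ = -2`
gives the Kac formula `h_{r,s} = ((r q - s p)² - (q - p)²) / (4 p q)`. Hence two weights agree iff
`a q - b p = ±(a' q - b' p)`, and the two signs are the two alternatives of the theorem.
-/

noncomputable section

/-- The Kac formula for `h_{r,s}`. -/
theorem hRS_zero (p q : ℕ) (hp : 0 < p) (hq : 0 < q) (r s : ℤ) :
    hRS p q r s 0 =
      (((r : ℝ) * q - s * p) ^ 2 - ((q : ℝ) - p) ^ 2) / (4 * p * q) := by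
  have hp' : (0 : ℝ) < p := by exact_mod_cast hp
  have hq' : (0 : ℝ) < q := by exact_mod_cast hq
  have hP : alphaP p q ^ 2 = 2 * (q : ℝ) / p := Real.sq_sqrt (by positivity)
  have hM : alphaM p q ^ 2 = 2 * (p : ℝ) / q := by
    rw [alphaM, neg_sq]
    exact Real.sq_sqrt (by positivity)
  have hPM : alphaP p q * alphaM p q = -2 := by
    have h4 : 2 * (q : ℝ) / p * (2 * p / q) = 2 ^ 2 := by
      field_simp
    rw [alphaP, alphaM, mul_neg, ← Real.sqrt_mul (by positivity), h4,
      Real.sqrt_sq (by norm_num)]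
  have hsq : hRS p q r s 0 = (((r : ℝ) ^ 2 - 1) * alphaP p q ^ 2
      + ((s : ℝ) ^ 2 - 1) * alphaM p q ^ 2
      + 2 * ((r : ℝ) * s - 1) * (alphaP p q * alphaM p q)) / 8 := by
    simp only [hRS, hwt, alphaRS, alphaZ, Int.cast_zero]
    ring
  rw [hsq, hP, hM, hPM]
  field_simp
  ring

/-- For coprime `p₋ > p₊ ≥ 2` and all integers `a, b, a', b'`:
`h_{a,b} = h_{a',b'}` iff `(a'-a)·p₋ = (b'-b)·p₊` or `(a+a')·p₋ = (b+b')·p₊`.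
(Here `p = p₊`, `q = p₋`.) -/
theorem hRS_eq_iff (p q : ℕ) (hco : Nat.Coprime p q) (hp : 2 ≤ p) (hpq : p < q)
    (a b a' b' : ℤ) :
    hRS p q a b 0 = hRS p q a' b' 0 ↔
      (a' - a) * (q : ℤ) = (b' - b) * (p : ℤ) ∨ (a + a') * (q : ℤ) = (b + b') * (p : ℤ) := by
  have hp0 : 0 < p := by omega
  have hq0 : 0 < q := by omega
  have hpr : (p : ℝ) ≠ 0 := by exact_mod_cast hp0.ne'
  have hqr : (q : ℝ) ≠ 0 := by exact_mod_cast hq0.ne'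
  have hpq4 : (4 * p * q : ℝ) ≠ 0 := by positivity
  rw [hRS_zero p q hp0 hq0, hRS_zero p q hp0 hq0, div_left_inj' hpq4, sub_left_inj]
  have hcast : ((a : ℝ) * q - b * p) ^ 2 = ((a' : ℝ) * q - b' * p) ^ 2 ↔
      (a * q - b * p) ^ 2 = (a' * q - b' * p) ^ 2 := by
    exact_mod_cast Iff.rfl
  rw [hcast, sq_eq_sq_iff_eq_or_eq_neg]
  refine or_congr ?_ ?_ <;> constructor <;> intro h <;> linarith
end
end
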